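/- Let d ≥ 2, k ≥ 2, 1 ≤ t ≤ k, let ψ ∈ ℂ^d be a unit vector with projector P = |ψ⟩⟨ψ|, and let Ω = P + λ(I − P) with λ ∈ [0,1). With S_k the cyclic-shift unitary on (ℂ^d)^{⊗k} and D_k = (I + S_k)/2, one has tr[(Ω^{⊗t} ⊗ I^{⊗(k−t)}) · D_k (I/d^k) D_k†] = (1/2)[(λ + (1−λ)/d)^t + ((d−1)λ^t + 1)/d^k], where I/d^k is the maximally mixed state on (ℂ^d)^{⊗k}. -/

import Mathlib

open Matrix Kronecker BigOperators

noncomputable section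

/-- The cyclically previous index: `m - 1 (mod k)`. -/
def prevIdx {k : ℕ} (m : Fin k) : Fin k :=
  ⟨(m.val + (k - 1)) % k, Nat.mod_lt _ m.pos⟩

/-- The cyclic-shift unitary `S_k` on `(ℂ^d)^{⊗k}`, determined by
`S_k (v_1 ⊗ ⋯ ⊗ v_k) = v_k ⊗ v_1 ⊗ ⋯ ⊗ v_{k-1}`, written as a matrix in the
standard tensor-product basis indexed by functions `Fin k → Fin d`. -/
def cyc (d k : ℕ) : Matrix (Fin k → Fin d) (Fin k → Fin d) ℂ :=
  fun g f => if g = fun m => f (prevIdx m) then 1 else 0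

/-- The SWAP projection `D_k = (I + S_k)/2`. -/
def Dk (d k : ℕ) : Matrix (Fin k → Fin d) (Fin k → Fin d) ℂ :=
  (1 / 2 : ℂ) • (1 + cyc d k)

/-- The tensor product `A_1 ⊗ A_2 ⊗ ⋯ ⊗ A_k` of `d × d` matrices, acting
factor-wise on `(ℂ^d)^{⊗k}`. -/
def tensOp {d k : ℕ} (A : Fin k → Matrix (Fin d) (Fin d) ℂ) :
    Matrix (Fin k → Fin d) (Fin k → Fin d) ℂ :=
  fun g f => ∏ m, A m (g m) (f m)

/-- The tensor product `v_1 ⊗ ⋯ ⊗ v_k` of vectors in `ℂ^d`. -/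
def tensVec {d k : ℕ} (v : Fin k → (Fin d → ℂ)) : (Fin k → Fin d) → ℂ :=
  fun f => ∏ m, v m (f m)

/-- The partial trace over the last `k - 1` tensor factors, mapping matrices on
`(ℂ^d)^{⊗k}` to `d × d` matrices by tracing out factors `2` through `k`. -/
def ptraceFirst {d k : ℕ} (M : Matrix (Fin k → Fin d) (Fin k → Fin d) ℂ) :
    Matrix (Fin d) (Fin d) ℂ :=
  fun a b => ∑ r : {i : Fin k // i.val ≠ 0} → Fin d,
    M (fun m => if h : m.val = 0 then a else r ⟨m, h⟩)
      (fun m => if h : m.val = 0 then b else r ⟨m, h⟩)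

/-!
Since `S_k` is unitary, `D_k D_k† = (2I + S_k + S_k†)/4`, so only three traces matter. The trace of
a product operator is the product of the traces of its factors, while multiplying it by `S_k†`
closes the factors up into a cycle, so that `tr[(A_1 ⊗ ⋯ ⊗ A_k) S_k†] = tr(A_1 ⋯ A_k)`; transposing
gives the same for `S_k` with the transposed factors. With `t` factors `Ω` and `k - t` factors `I`
this leaves `tr Ω` and `tr (Ω ^ t)`, both read off from `Ω ^ n = P + λ ^ n (I - P)`.
-/

lemma prevIdx_zero {n : ℕ} : prevIdx (0 : Fin (n + 1)) = Fin.last n := by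
  ext
  simp [prevIdx]

lemma prevIdx_succ {n : ℕ} (i : Fin n) : prevIdx i.succ = i.castSucc := by
  ext
  have h : i.val + 1 + n = i.val + (n + 1) := by omega
  simp [prevIdx, h, Nat.mod_eq_of_lt (i.isLt.trans n.lt_succ_self)]

lemma prevIdx_eq_finRotate_symm {k : ℕ} (m : Fin k) : prevIdx m = (finRotate k).symm m := by
  rw [Equiv.eq_symm_apply]
  cases k with
  | zero => exact m.elim0
  | succ n =>
    cases m using Fin.cases with
    | zero => rw [prevIdx_zero, finRotate_last]
    | succ i => rw [prevIdx_succ, finRotate_apply, Fin.coeSucc_eq_succ]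

section MatrixProducts

variable {ι R : Type*} [Fintype ι] [DecidableEq ι] [CommSemiring R]

-- `Fin.cons x f` and `Fin.snoc f y` list the sources and the targets of the steps of the path
-- `x, f 0, …, f (n - 1), y`.
lemma prod_ofFn_apply {n : ℕ} (A : Fin (n + 1) → Matrix ι ι R) (x y : ι) :
    (List.ofFn A).prod x y =
      ∑ f : Fin n → ι, ∏ i, A i (Fin.cons (α := fun _ ↦ ι) x f i)
        (Fin.snoc (α := fun _ ↦ ι) f y i) := by
  induction n generalizing x with
  | zero => simp [Fin.snoc]
  | succ n ih =>
    rw [List.ofFn_succ, List.prod_cons, Matrix.mul_apply,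
      ← (Fin.consEquiv fun _ ↦ ι).sum_comp, Fintype.sum_prod_type]
    refine Finset.sum_congr rfl fun z _ ↦ ?_
    rw [ih, Finset.mul_sum]
    refine Finset.sum_congr rfl fun f _ ↦ ?_
    change _ = ∏ i, A i (Fin.cons (α := fun _ ↦ ι) x (Fin.cons (α := fun _ ↦ ι) z f) i)
      (Fin.snoc (α := fun _ ↦ ι) (Fin.cons (α := fun _ ↦ ι) z f) y i)
    rw [← Fin.cons_snoc_eq_snoc_cons, Fin.prod_univ_succ (n := n + 1)]
    simp only [Fin.cons_zero, Fin.cons_succ]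

lemma trace_prod_ofFn {k : ℕ} [NeZero k] (A : Fin k → Matrix ι ι R) :
    (List.ofFn A).prod.trace = ∑ f : Fin k → ι, ∏ m, A m (f (prevIdx m)) (f m) := by
  obtain ⟨n, rfl⟩ := Nat.exists_eq_succ_of_ne_zero (NeZero.ne k)
  rw [← (Fin.snocEquiv fun _ ↦ ι).sum_comp, Fintype.sum_prod_type]
  refine Finset.sum_congr rfl fun x _ ↦ ?_
  rw [diag_apply, prod_ofFn_apply]
  refine Finset.sum_congr rfl fun f _ ↦ Finset.prod_congr rfl fun m _ ↦ ?_
  cases m using Fin.cases <;> simp [prevIdx_zero, prevIdx_succ]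

lemma prod_trace_ite_val_lt {k t : ℕ} (ht : t ≤ k) (M : Matrix ι ι R) :
    ∏ m : Fin k, (if m.val < t then M else 1).trace =
      M.trace ^ t * (Fintype.card ι : R) ^ (k - t) := by
  obtain ⟨s, rfl⟩ := Nat.exists_eq_add_of_le ht
  simp [Fin.prod_univ_add]

end MatrixProducts

lemma prod_ofFn_ite_val_lt {M : Type*} [Monoid M] {k t : ℕ} (ht : t ≤ k) (a : M) :
    (List.ofFn fun m : Fin k ↦ if m.val < t then a else 1).prod = a ^ t := by
  obtain ⟨s, rfl⟩ := Nat.exists_eq_add_of_le ht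
  simp [List.ofFn_add]

section TensorOperators

variable {d k : ℕ}

lemma cyc_eq_permMatrix :
    cyc d k =
      Equiv.Perm.permMatrix ℂ ((finRotate k).symm.arrowCongr (Equiv.refl (Fin d))) := by
  ext g f
  have h : g = (fun m ↦ f (prevIdx m)) ↔
      f = (finRotate k).symm.arrowCongr (Equiv.refl (Fin d)) g := by
    rw [← Equiv.symm_apply_eq, eq_comm]
    simp [funext_iff, prevIdx_eq_finRotate_symm]
  simp [cyc, h, PEquiv.toMatrix_apply, eq_comm]

lemma cyc_mul_conjTranspose : cyc d k * (cyc d k)ᴴ = 1 := by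
  rw [cyc_eq_permMatrix, conjTranspose_permMatrix, ← permMatrix_mul, inv_mul_cancel,
    permMatrix_one]

lemma conjTranspose_cyc : (cyc d k)ᴴ = (cyc d k)ᵀ := by
  rw [cyc_eq_permMatrix, conjTranspose_permMatrix, transpose_permMatrix]

lemma transpose_tensOp (A : Fin k → Matrix (Fin d) (Fin d) ℂ) :
    (tensOp A)ᵀ = tensOp fun m ↦ (A m)ᵀ :=
  rfl

lemma trace_tensOp (A : Fin k → Matrix (Fin d) (Fin d) ℂ) :
    (tensOp A).trace = ∏ m, (A m).trace :=
  (Fintype.prod_sum fun m i ↦ A m i i).symm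

lemma trace_tensOp_mul_conjTranspose_cyc [NeZero k] (A : Fin k → Matrix (Fin d) (Fin d) ℂ) :
    (tensOp A * (cyc d k)ᴴ).trace = (List.ofFn A).prod.trace := by
  rw [trace_prod_ofFn, conjTranspose_cyc]
  simp only [trace, diag_apply, mul_apply, transpose_apply, cyc, tensOp]
  rw [Finset.sum_comm]
  simp

lemma trace_tensOp_mul_cyc [NeZero k] (A : Fin k → Matrix (Fin d) (Fin d) ℂ) :
    (tensOp A * cyc d k).trace = (List.ofFn fun m ↦ (A m)ᵀ).prod.trace := by
  rw [← trace_tensOp_mul_conjTranspose_cyc, ← trace_transpose, transpose_mul, transpose_tensOp,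
    trace_mul_comm, conjTranspose_cyc]

lemma Dk_mul_smul_one_mul_conjTranspose (c : ℂ) :
    Dk d k * (c • (1 : Matrix (Fin k → Fin d) (Fin k → Fin d) ℂ)) * (Dk d k)ᴴ =
      (c / 4) • ((2 : ℂ) • 1 + cyc d k + (cyc d k)ᴴ) := by
  have h_expand : (1 + cyc d k) * (1 + cyc d k)ᴴ = (2 : ℂ) • 1 + cyc d k + (cyc d k)ᴴ := by
    rw [conjTranspose_add, conjTranspose_one, add_mul, mul_add, mul_add, cyc_mul_conjTranspose,
      one_mul, one_mul, mul_one, two_smul]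
    abel
  have h_scalar : star (1 / 2 : ℂ) = 1 / 2 := by simp
  rw [Dk, conjTranspose_smul, h_scalar]
  simp only [mul_smul_comm, smul_mul_assoc, mul_one, h_expand, smul_smul]
  congr 1
  ring

lemma trace_tensOp_mul_Dk_mul_smul_one [NeZero k] (A : Fin k → Matrix (Fin d) (Fin d) ℂ) (c : ℂ) :
    (tensOp A * (Dk d k * (c • (1 : Matrix (Fin k → Fin d) (Fin k → Fin d) ℂ)) *
        (Dk d k)ᴴ)).trace =
      c / 4 * (2 * ∏ m, (A m).trace + (List.ofFn fun m ↦ (A m)ᵀ).prod.trace +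
        (List.ofFn A).prod.trace) := by
  rw [Dk_mul_smul_one_mul_conjTranspose, mul_smul_comm, trace_smul, mul_add, mul_add, trace_add,
    trace_add, mul_smul_comm, mul_one, trace_smul, trace_tensOp, trace_tensOp_mul_cyc,
    trace_tensOp_mul_conjTranspose_cyc, smul_eq_mul, smul_eq_mul]

lemma trace_tensOp_ite_mul_Dk_maximallyMixed (hd : d ≠ 0) (hk : k ≠ 0) {t : ℕ} (ht : t ≤ k)
    (M : Matrix (Fin d) (Fin d) ℂ) :
    (tensOp (fun m : Fin k ↦ if m.val < t then M else 1) *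
        (Dk d k * (((d : ℂ) ^ k)⁻¹ • (1 : Matrix (Fin k → Fin d) (Fin k → Fin d) ℂ)) *
          (Dk d k)ᴴ)).trace =
      1 / 2 * ((M.trace / d) ^ t + (M ^ t).trace / (d : ℂ) ^ k) := by
  have : NeZero k := ⟨hk⟩
  have hd' : (d : ℂ) ≠ 0 := Nat.cast_ne_zero.mpr hd
  have h_transpose : (List.ofFn fun m : Fin k ↦ (if m.val < t then M else 1)ᵀ).prod = (M ^ t)ᵀ := by
    simp only [apply_ite transpose, transpose_one]
    rw [prod_ofFn_ite_val_lt ht, transpose_pow]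
  rw [trace_tensOp_mul_Dk_mul_smul_one, h_transpose, trace_transpose, prod_ofFn_ite_val_lt ht,
    prod_trace_ite_val_lt ht, Fintype.card_fin, div_pow, pow_sub₀ _ hd' ht]
  field_simp
  ring

end TensorOperators

lemma add_smul_one_sub_pow_of_isIdempotentElem {S R : Type*} [CommSemiring S] [Ring R]
    [Algebra S R] {p : R} (hp : IsIdempotentElem p) (c : S) (n : ℕ) :
    (p + c • (1 - p)) ^ n = p + c ^ n • (1 - p) := by
  induction n with
  | zero => simp
  | succ n ih =>
    rw [pow_succ, ih]
    simp only [add_mul, mul_add, smul_mul_assoc, mul_smul_comm, hp.eq, hp.mul_one_sub_self,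
      hp.one_sub_mul_self, hp.one_sub.eq, smul_zero, add_zero, zero_add, smul_smul, pow_succ' c]

lemma trace_add_smul_one_sub_pow {n S : Type*} [Fintype n] [DecidableEq n] [CommRing S]
    {P : Matrix n n S} (hP : IsIdempotentElem P) (c : S) (m : ℕ) :
    ((P + c • (1 - P)) ^ m).trace = (Fintype.card n - P.trace) * c ^ m + P.trace := by
  rw [add_smul_one_sub_pow_of_isIdempotentElem hP, trace_add, trace_smul, trace_sub, trace_one,
    smul_eq_mul]
  ring

lemma isIdempotentElem_vecMulVec {n S : Type*} [Fintype n] [CommSemiring S] {v w : n → S}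
    (h : w ⬝ᵥ v = 1) : IsIdempotentElem (vecMulVec v w) := by
  rw [IsIdempotentElem, vecMulVec_mul_vecMulVec, h, one_smul]

theorem stmt11_general {d k t : ℕ} (hd : d ≠ 0) (hk : k ≠ 0) (ht : t ≤ k)
    {P : Matrix (Fin d) (Fin d) ℂ} (hP : IsIdempotentElem P) (lam : ℂ) :
    (tensOp (fun m : Fin k ↦ if m.val < t then P + lam • (1 - P) else 1) *
        (Dk d k * (((d : ℂ) ^ k)⁻¹ • (1 : Matrix (Fin k → Fin d) (Fin k → Fin d) ℂ)) *
          (Dk d k)ᴴ)).trace =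
      1 / 2 * ((lam + (1 - lam) * P.trace / d) ^ t +
        ((d - P.trace) * lam ^ t + P.trace) / (d : ℂ) ^ k) := by
  have h_trace : (P + lam • (1 - P)).trace / d = lam + (1 - lam) * P.trace / d := by
    have h := trace_add_smul_one_sub_pow hP lam 1
    rw [pow_one, pow_one, Fintype.card_fin] at h
    have hd' : (d : ℂ) ≠ 0 := Nat.cast_ne_zero.mpr hd
    rw [h]
    field_simp
    ring
  rw [trace_tensOp_ite_mul_Dk_maximallyMixed hd hk ht, h_trace, trace_add_smul_one_sub_pow hP,
    Fintype.card_fin]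

/-- for the maximally mixed state `I/d^k` on `(ℂ^d)^{⊗k}`,
`tr[(Ω^{⊗t} ⊗ I^{⊗(k−t)}) · D_k (I/d^k) D_k†]
  = (1/2)[(λ + (1−λ)/d)^t + ((d−1)λ^t + 1)/d^k]`. -/
theorem stmt11 (d k t : ℕ) (hd : 2 ≤ d) (hk : 2 ≤ k) (ht1 : 1 ≤ t) (ht2 : t ≤ k)
    (ψ : Fin d → ℂ) (hψ : star ψ ⬝ᵥ ψ = 1)
    (lam : ℝ) (hlam0 : 0 ≤ lam) (hlam1 : lam < 1)
    (P Ω : Matrix (Fin d) (Fin d) ℂ)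
    (hP : P = vecMulVec ψ (star ψ))
    (hΩ : Ω = P + (lam : ℂ) • (1 - P)) :
    (tensOp (fun m : Fin k => if m.val < t then Ω else 1)
        * (Dk d k * (((d : ℂ) ^ k)⁻¹ • (1 : Matrix (Fin k → Fin d) (Fin k → Fin d) ℂ))
            * (Dk d k)ᴴ)).trace
      = (1 / 2 : ℂ) * (((lam + (1 - lam) / (d : ℝ)) ^ t
          + (((d : ℝ) - 1) * lam ^ t + 1) / (d : ℝ) ^ k : ℝ) : ℂ) := by
  subst hP hΩ
  simpa [trace_vecMulVec, dotProduct_comm ψ, hψ] using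
    stmt11_general (by omega) (by omega) ht2 (isIdempotentElem_vecMulVec hψ) lam
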